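/- There exists an absolute constant C > 0 with the following property. Let Φ ∈ ℝ^{m×n} have restricted isometry constant δ := δ_{2K} ∈ (0,1) of order 2K, let x ∈ ℝ^n be K-sparse with support T, |T| = K ≥ 1, set κ := max_{i,j∈T} |x_i|/|x_j|, and let y = Φx + v with v ≠ 0. If SNR ≥ κ²·δ^{−3/2}, then every run of K iterations of OMP applied to (Φ, y) recovers the support of x with error rate ρ_error := |T^K \ T| / K ≤ C·κ²·δ^{1/2}. -/

import Mathlib

noncomputable section
open Finset

/-- `Vec n` is `ℝ^n` with the Euclidean (ℓ²) norm. -/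
abbrev Vec (n : ℕ) := EuclideanSpace ℝ (Fin n)

/-- The standard inner product `⟨u, v⟩ = ∑ i, u i * v i`. -/
def dot {n : ℕ} (u v : Vec n) : ℝ := ∑ i, u i * v i

/-- The `j`-th column of a matrix, as a Euclidean vector. -/
def col {m n : ℕ} (Φ : Matrix (Fin m) (Fin n) ℝ) (j : Fin n) : Vec m :=
  WithLp.toLp 2 fun i => Φ i j

/-- Matrix-vector multiplication `Φ x`, valued in Euclidean space. -/
def mulVec' {m n : ℕ} (Φ : Matrix (Fin m) (Fin n) ℝ) (x : Vec n) : Vec m :=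
  WithLp.toLp 2 fun i => ∑ j, Φ i j * x j

/-- The support of a vector, as a `Finset`. -/
def suppF {n : ℕ} (x : Vec n) : Finset (Fin n) :=
  Finset.univ.filter fun i => x i ≠ 0

/-- Restriction of a vector to an index set (zero outside the set). -/
def restrict {n : ℕ} (x : Vec n) (S : Finset (Fin n)) : Vec n :=
  WithLp.toLp 2 fun i => if i ∈ S then x i else 0

/-- `RIPConst Φ L δ` : δ is the restricted isometry constant of `Φ` of order `L`,
i.e. the smallest `c ≥ 0` such that `(1-c)‖u‖² ≤ ‖Φu‖² ≤ (1+c)‖u‖²` for all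
`L`-sparse `u`. -/
def RIPConst {m n : ℕ} (Φ : Matrix (Fin m) (Fin n) ℝ) (L : ℕ) (δ : ℝ) : Prop :=
  IsLeast {c : ℝ | 0 ≤ c ∧ ∀ u : Vec n, (suppF u).card ≤ L →
    (1 - c) * ‖u‖ ^ 2 ≤ ‖mulVec' Φ u‖ ^ 2 ∧ ‖mulVec' Φ u‖ ^ 2 ≤ (1 + c) * ‖u‖ ^ 2} δ

/-- Signal-to-noise ratio `‖Φx‖²/‖v‖²`. -/
def SNR {m n : ℕ} (Φ : Matrix (Fin m) (Fin n) ℝ) (x : Vec n) (v : Vec m) : ℝ :=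
  ‖mulVec' Φ x‖ ^ 2 / ‖v‖ ^ 2

/-- A run of `N` iterations of Orthogonal Matching Pursuit on data `(Φ, y)`:
`idx (k+1) = t^{k+1}` is the index selected at iteration `k+1`, `sets k = T^k`,
`est k = x^k` and `res k = r^k`. -/
structure OMPRun {m n : ℕ} (Φ : Matrix (Fin m) (Fin n) ℝ) (y : Vec m) (N : ℕ) where
  idx : ℕ → Fin n
  sets : ℕ → Finset (Fin n)
  est : ℕ → Vec n
  res : ℕ → Vec m
  sets_zero : sets 0 = ∅
  est_zero : est 0 = 0
  res_zero : res 0 = y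
  idx_not_mem : ∀ k < N, idx (k + 1) ∉ sets k
  idx_max : ∀ k < N, ∀ i : Fin n, i ∉ sets k →
    |dot (col Φ i) (res k)| ≤ |dot (col Φ (idx (k + 1))) (res k)|
  sets_succ : ∀ k < N, sets (k + 1) = insert (idx (k + 1)) (sets k)
  est_supp : ∀ k < N, suppF (est (k + 1)) ⊆ sets (k + 1)
  est_min : ∀ k < N, ∀ u : Vec n, suppF u ⊆ sets (k + 1) →
    ‖y - mulVec' Φ (est (k + 1))‖ ≤ ‖y - mulVec' Φ u‖
  res_succ : ∀ k < N, res (k + 1) = y - mulVec' Φ (est (k + 1))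

/-- The vector `Φᵀ w` restricted to an index set `A` (the vector of correlations
`⟨φ_i, w⟩` for `i ∈ A`, zero outside `A`), as a Euclidean vector. -/
def colDots {m n : ℕ} (Φ : Matrix (Fin m) (Fin n) ℝ) (A : Finset (Fin n)) (w : Vec m) : Vec n :=
  WithLp.toLp 2 fun i => if i ∈ A then dot (col Φ i) w else 0

/-- The vector `Φᵀ w` of all column correlations, as a plain function (so `‖·‖`
is the sup/ℓ∞ norm). -/
def dualVec {m n : ℕ} (Φ : Matrix (Fin m) (Fin n) ℝ) (w : Vec m) : Fin n → ℝ :=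
  fun i => dot (col Φ i) w

/-- `P⊥_S w` : the projection of `w` onto the orthogonal complement of the span
of the columns of `Φ` indexed by `S`. -/
def perpProj {m n : ℕ} (Φ : Matrix (Fin m) (Fin n) ℝ) (S : Finset (Fin n)) (w : Vec m) : Vec m :=
  w - (Submodule.orthogonalProjectionOnto (Submodule.span ℝ (col Φ '' (S : Set (Fin n)))) w : Vec m)

/-- The `j`-th largest value (1-indexed) among `{|x i| : i ∈ Γ}` (with
multiplicities); `0` if `j > |Γ|` or `j = 0`. -/
def kthLargest {n : ℕ} (x : Vec n) (Γ : Finset (Fin n)) (j : ℕ) : ℝ :=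
  if 1 ≤ j ∧ j ≤ Γ.card then
    (Multiset.sort (Γ.val.map fun i => |x i|) (· ≤ ·)).getD (Γ.card - j) 0
  else 0

/-! Write `s = √δ`, `M = max |x i|` over the support and `K` for its size. By the near isometry and
the low noise, at every iteration the correlations `⟨φ i, r⟩` of the support indices still missed
agree with the coefficients `x i` up to an `ℓ²` error whose square is of order `s³ K M²`. By
Chebyshev's inequality all but `O(s K)` of these indices therefore satisfy
`|x i| ≤ |⟨φ t, r⟩| + s M`, where `t` is the selected index. So if `O(s K)` missed indices are
disregarded, each iteration, right or wrong, selects a correlation large enough to pay for one of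
the remaining coefficients `x i ^ 2`. A right selection needs this to pay for the removal of one
index from the missed set, whereas a wrong one leaves the missed set unchanged, so that at least
`min x i ^ 2` is paid in excess. The total payment is bounded by the loss of residual energy, which
exceeds the energy of the coefficients found by only `O(s K M²)`. Hence the wrong selections number
`O(s K M² / min x i ^ 2) = O(κ² s K)`.
-/

open scoped InnerProductSpace

section TrimmedSum

variable {ι : Type*} {b : ι → ℝ} {j : ℕ} {s t : Finset ι}

/-- The sum of `b` over `s` after discarding the `j` terms that contribute most: the least sum of
`b` over a subset of `s` that misses at most `j` elements. It serves as the potential that measures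
the progress of a run of OMP. -/
def trimmedSum (b : ι → ℝ) (j : ℕ) (s : Finset ι) : ℝ :=
  {r ∈ s.powerset | #s ≤ #r + j}.inf' ⟨s, by simp⟩ fun r => ∑ i ∈ r, b i

lemma trimmedSum_le_sum_of_subset (hts : t ⊆ s) (hcard : #s ≤ #t + j) :
    trimmedSum b j s ≤ ∑ i ∈ t, b i :=
  inf'_le _ (by simp [hts, hcard])

lemma exists_trimmedSum_eq_sum (b : ι → ℝ) (j : ℕ) (s : Finset ι) :
    ∃ t ⊆ s, #s ≤ #t + j ∧ trimmedSum b j s = ∑ i ∈ t, b i := by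
  obtain ⟨t, ht, h⟩ := exists_mem_eq_inf' (s := {r ∈ s.powerset | #s ≤ #r + j}) ⟨s, by simp⟩
    fun r => ∑ i ∈ r, b i
  rw [mem_filter, mem_powerset] at ht
  exact ⟨t, ht.1, ht.2, h⟩

lemma sum_sub_mul_le_trimmedSum {B : ℝ} (hB : 0 ≤ B) (hb : ∀ i ∈ s, b i ≤ B) :
    ∑ i ∈ s, b i - j * B ≤ trimmedSum b j s := by
  classical
  obtain ⟨t, hts, hcard, h⟩ := exists_trimmedSum_eq_sum b j s
  have hsdiff : #(s \ t) ≤ j := by rw [card_sdiff_of_subset hts]; omega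
  have hdiscard : ∑ i ∈ s \ t, b i ≤ j * B :=
    calc ∑ i ∈ s \ t, b i ≤ #(s \ t) • B :=
          sum_le_card_nsmul _ _ _ fun i hi => hb i (sdiff_subset hi)
      _ ≤ j * B := by rw [nsmul_eq_mul]; gcongr
  linarith [sum_sdiff hts (f := b)]

lemma trimmedSum_le_trimmedSum_erase_add [DecidableEq ι] {h : ℝ} (hh : 0 ≤ h)
    (hcard : #{i ∈ s | h < b i} ≤ j) (a : ι) :
    trimmedSum b j s ≤ trimmedSum b j (s.erase a) + h := by
  obtain ⟨t, hta, htj, heq⟩ := exists_trimmedSum_eq_sum b j (s.erase a)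
  have hts : t ⊆ s := hta.trans (erase_subset _ _)
  rw [heq]
  by_cases hst : #s ≤ #t + j
  · linarith [trimmedSum_le_sum_of_subset (b := b) hts hst]
  obtain ⟨i, hi, hbi⟩ : ∃ i ∈ s \ t, b i ≤ h := by
    by_contra! hlt
    have hsub : s \ t ⊆ {i ∈ s | h < b i} :=
      fun i hi => mem_filter.2 ⟨sdiff_subset hi, hlt i hi⟩
    have := card_le_card hsub
    rw [card_sdiff_of_subset hts] at this
    omega
  rw [mem_sdiff] at hi
  have hle := trimmedSum_le_sum_of_subset (b := b) (insert_subset hi.1 hts) (j := j) (by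
    have := pred_card_le_card_erase (s := s) (a := a)
    rw [card_insert_of_notMem hi.2]
    omega)
  rw [sum_insert hi.2] at hle
  linarith

end TrimmedSum

section InnerProduct

variable {E : Type*} [NormedAddCommGroup E] [InnerProductSpace ℝ E]

lemma norm_sub_inner_div_smul_sq_le {φ : E} {c : ℝ} (hc : 0 < c) (hφ : ‖φ‖ ^ 2 ≤ c) (r : E) :
    ‖r - (⟪φ, r⟫_ℝ / c) • φ‖ ^ 2 ≤ ‖r‖ ^ 2 - ⟪φ, r⟫_ℝ ^ 2 / c := by
  rw [norm_sub_sq_real, inner_smul_right, real_inner_comm φ r, norm_smul, mul_pow,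
    Real.norm_eq_abs, sq_abs]
  set p := ⟪φ, r⟫_ℝ
  calc ‖r‖ ^ 2 - 2 * (p / c * p) + (p / c) ^ 2 * ‖φ‖ ^ 2
      ≤ ‖r‖ ^ 2 - 2 * (p / c * p) + (p / c) ^ 2 * c := by gcongr
    _ = ‖r‖ ^ 2 - p ^ 2 / c := by field_simp; ring

lemma abs_two_mul_inner_le {a v : E} {s B : ℝ} (hs : 0 ≤ s) (hB : 0 ≤ B)
    (hv : ‖v‖ ^ 2 ≤ s ^ 2 * B) : |2 * ⟪a, v⟫_ℝ| ≤ s * (‖a‖ ^ 2 + B) := by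
  refine abs_le_of_sq_le_sq ?_ (by positivity)
  calc (2 * ⟪a, v⟫_ℝ) ^ 2 = 4 * |⟪a, v⟫_ℝ| ^ 2 := by rw [sq_abs]; ring
    _ ≤ 4 * (‖a‖ * ‖v‖) ^ 2 := by gcongr; exact abs_real_inner_le_norm a v
    _ = 4 * (‖a‖ ^ 2 * ‖v‖ ^ 2) := by ring
    _ ≤ 4 * (‖a‖ ^ 2 * (s ^ 2 * B)) := by gcongr
    _ ≤ (s * (‖a‖ ^ 2 + B)) ^ 2 := by nlinarith [sq_nonneg (s * (‖a‖ ^ 2 - B))]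

end InnerProduct

section SparseVectors

variable {n : ℕ} {x u : Vec n} {s : Finset (Fin n)} {i : Fin n}

lemma mem_suppF : i ∈ suppF x ↔ x i ≠ 0 := by simp [suppF]

lemma suppF_subset_iff : suppF x ⊆ s ↔ ∀ i ∉ s, x i = 0 := by
  simp only [subset_iff, mem_suppF]
  exact forall_congr' fun i => not_imp_comm

lemma suppF_sub_subset (x u : Vec n) : suppF (x - u) ⊆ suppF x ∪ suppF u := by
  simp +contextual [suppF_subset_iff, mem_suppF]

lemma suppF_add_subset (x u : Vec n) : suppF (x + u) ⊆ suppF x ∪ suppF u := by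
  simp +contextual [suppF_subset_iff, mem_suppF]

lemma suppF_smul_subset (c : ℝ) (x : Vec n) : suppF (c • x) ⊆ suppF x := by
  simp +contextual [suppF_subset_iff, mem_suppF]

lemma suppF_single_subset (i : Fin n) (c : ℝ) : suppF (EuclideanSpace.single i c) ⊆ {i} :=
  suppF_subset_iff.2 fun k hk => by simp [mem_singleton.not.1 hk]

lemma suppF_restrict_subset (x : Vec n) (s : Finset (Fin n)) : suppF (_root_.restrict x s) ⊆ s := by
  simp +contextual [suppF_subset_iff, _root_.restrict]

lemma sum_sq_le_norm_sq (x : Vec n) (s : Finset (Fin n)) : ∑ i ∈ s, x i ^ 2 ≤ ‖x‖ ^ 2 := by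
  rw [EuclideanSpace.real_norm_sq_eq]
  exact sum_le_univ_sum_of_nonneg fun i => sq_nonneg (x i)

lemma norm_sq_eq_sum_suppF (x : Vec n) : ‖x‖ ^ 2 = ∑ i ∈ suppF x, x i ^ 2 := by
  rw [EuclideanSpace.real_norm_sq_eq]
  exact (sum_subset (subset_univ _) (by simp [mem_suppF])).symm

lemma inner_restrict_left (x u : Vec n) (s : Finset (Fin n)) :
    ⟪_root_.restrict x s, u⟫_ℝ = ∑ i ∈ s, x i * u i := by
  simp [_root_.restrict, PiLp.inner_apply, mul_comm]

lemma norm_restrict_sq (x : Vec n) (s : Finset (Fin n)) :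
    ‖_root_.restrict x s‖ ^ 2 = ∑ i ∈ s, x i ^ 2 := by
  simp [EuclideanSpace.real_norm_sq_eq, _root_.restrict, ite_pow]

lemma inner_restrict_self (x : Vec n) (s : Finset (Fin n)) :
    ⟪_root_.restrict x s, x⟫_ℝ = ‖_root_.restrict x s‖ ^ 2 := by
  simp only [inner_restrict_left, norm_restrict_sq, ← sq]

end SparseVectors

section MulVec

variable {m n : ℕ} (Φ : Matrix (Fin m) (Fin n) ℝ)

lemma dot_eq_inner {n : ℕ} (u v : Vec n) : dot u v = ⟪u, v⟫_ℝ := by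
  simp [dot, PiLp.inner_apply, mul_comm]

lemma mulVec'_eq_toEuclideanLin (u : Vec n) : mulVec' Φ u = Matrix.toEuclideanLin Φ u := rfl

lemma mulVec'_add (u w : Vec n) : mulVec' Φ (u + w) = mulVec' Φ u + mulVec' Φ w :=
  map_add (Matrix.toEuclideanLin Φ) u w

lemma mulVec'_sub (u w : Vec n) : mulVec' Φ (u - w) = mulVec' Φ u - mulVec' Φ w :=
  map_sub (Matrix.toEuclideanLin Φ) u w

lemma mulVec'_smul (c : ℝ) (u : Vec n) : mulVec' Φ (c • u) = c • mulVec' Φ u :=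
  map_smul (Matrix.toEuclideanLin Φ) c u

lemma mulVec'_zero : mulVec' Φ 0 = 0 := map_zero (Matrix.toEuclideanLin Φ)

lemma mulVec'_single_one (i : Fin n) : mulVec' Φ (EuclideanSpace.single i 1) = col Φ i := by
  ext; simp [mulVec', col]

lemma mulVec'_transpose_apply (w : Vec m) (i : Fin n) :
    mulVec' Φ.transpose w i = dot (col Φ i) w := rfl

lemma inner_mulVec'_left (u : Vec n) (w : Vec m) :
    ⟪mulVec' Φ u, w⟫_ℝ = ⟪u, mulVec' Φ.transpose w⟫_ℝ := by
  simp only [mulVec'_eq_toEuclideanLin, ← Matrix.conjTranspose_eq_transpose_of_trivial,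
    Matrix.toEuclideanLin_conjTranspose_eq_adjoint, LinearMap.adjoint_inner_right]

end MulVec

section RestrictedIsometry

variable {m n L : ℕ} {Φ : Matrix (Fin m) (Fin n) ℝ} {δ : ℝ}

/-- The restricted isometry property: `Φ` distorts the squared norm of every `L`-sparse vector by
a factor of at most `1 ± δ`. Unlike in `RIPConst`, `δ` need not be the least such constant. -/
def IsRestrictedIsometry (Φ : Matrix (Fin m) (Fin n) ℝ) (L : ℕ) (δ : ℝ) : Prop :=
  ∀ u : Vec n, #(suppF u) ≤ L →
    (1 - δ) * ‖u‖ ^ 2 ≤ ‖mulVec' Φ u‖ ^ 2 ∧ ‖mulVec' Φ u‖ ^ 2 ≤ (1 + δ) * ‖u‖ ^ 2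

lemma RIPConst.isRestrictedIsometry (h : RIPConst Φ L δ) : IsRestrictedIsometry Φ L δ := h.1.2

namespace IsRestrictedIsometry

lemma norm_col_sq_le (hΦ : IsRestrictedIsometry Φ L δ) (hL : 1 ≤ L) (i : Fin n) :
    ‖col Φ i‖ ^ 2 ≤ 1 + δ := by
  have h := (hΦ (EuclideanSpace.single i 1)
    ((card_le_card (suppF_single_subset i 1)).trans (by simpa using hL))).2
  simpa [mulVec'_single_one] using h

-- Polarization, applied to the rescaled vectors `‖w‖ • u` and `‖u‖ • w` of equal norm.
lemma inner_mulVec'_le (hΦ : IsRestrictedIsometry Φ L δ) {u w : Vec n}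
    (huw : #(suppF u ∪ suppF w) ≤ L) :
    ⟪mulVec' Φ u, mulVec' Φ w⟫_ℝ ≤ ⟪u, w⟫_ℝ + δ * (‖u‖ * ‖w‖) := by
  rcases eq_or_ne u 0 with rfl | hu
  · simp [mulVec'_zero]
  rcases eq_or_ne w 0 with rfl | hw
  · simp [mulVec'_zero]
  have hsmul : suppF (‖w‖ • u) ∪ suppF (‖u‖ • w) ⊆ suppF u ∪ suppF w :=
    union_subset_union (suppF_smul_subset _ _) (suppF_smul_subset _ _)
  have hadd := (hΦ (‖w‖ • u + ‖u‖ • w)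
    ((card_le_card ((suppF_add_subset _ _).trans hsmul)).trans huw)).2
  have hsub := (hΦ (‖w‖ • u - ‖u‖ • w)
    ((card_le_card ((suppF_sub_subset _ _).trans hsmul)).trans huw)).1
  simp only [mulVec'_add, mulVec'_sub, mulVec'_smul, norm_add_sq_real, norm_sub_sq_real,
    inner_smul_left, inner_smul_right, norm_smul, norm_norm, RCLike.conj_to_real] at hadd hsub
  have hpos : 0 < ‖u‖ * ‖w‖ := by positivity
  refine le_of_mul_le_mul_left ?_ hpos
  linarith

lemma norm_restrict_transpose_residual_sub_le (hΦ : IsRestrictedIsometry Φ L δ) (hδ : 0 ≤ δ)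
    {z : Vec n} {s : Finset (Fin n)} (hz : suppF z ⊆ s) (hs : #s ≤ L) (v : Vec m) :
    ‖_root_.restrict (mulVec' Φ.transpose (mulVec' Φ z + v) - z) s‖ ≤
      δ * ‖z‖ + √(1 + δ) * ‖v‖ := by
  set q := _root_.restrict (mulVec' Φ.transpose (mulVec' Φ z + v) - z) s with hq
  have hqs : suppF q ⊆ s := suppF_restrict_subset _ s
  rcases (norm_nonneg q).eq_or_lt with hq0 | hq0
  · rw [← hq0]; positivity
  have hΦq : ‖mulVec' Φ q‖ ≤ √(1 + δ) * ‖q‖ := by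
    have h := Real.sqrt_le_sqrt (hΦ q ((card_le_card hqs).trans hs)).2
    rwa [Real.sqrt_mul' _ (sq_nonneg _), Real.sqrt_sq (norm_nonneg _),
      Real.sqrt_sq (norm_nonneg _)] at h
  refine le_of_mul_le_mul_left ?_ hq0
  calc ‖q‖ * ‖q‖ = ⟪mulVec' Φ q, mulVec' Φ z⟫_ℝ + ⟪mulVec' Φ q, v⟫_ℝ - ⟪q, z⟫_ℝ := by
        rw [← inner_add_right, inner_mulVec'_left, ← inner_sub_right, hq, inner_restrict_self, sq]
    _ ≤ (⟪q, z⟫_ℝ + δ * (‖q‖ * ‖z‖)) + √(1 + δ) * ‖q‖ * ‖v‖ - ⟪q, z⟫_ℝ := by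
        gcongr
        · exact hΦ.inner_mulVec'_le ((card_le_card (union_subset hqs hz)).trans hs)
        · exact (real_inner_le_norm _ _).trans (by gcongr)
    _ = ‖q‖ * (δ * ‖z‖ + √(1 + δ) * ‖v‖) := by ring

end IsRestrictedIsometry

end RestrictedIsometry

namespace OMPRun

variable {m n N k : ℕ} {Φ : Matrix (Fin m) (Fin n) ℝ} {y : Vec m} (run : OMPRun Φ y N)

lemma res_eq (hk : k ≤ N) : run.res k = y - mulVec' Φ (run.est k) := by
  cases k with
  | zero => rw [run.res_zero, run.est_zero, mulVec'_zero, sub_zero]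
  | succ k => exact run.res_succ k hk

lemma suppF_est_subset (hk : k ≤ N) : suppF (run.est k) ⊆ run.sets k := by
  cases k with
  | zero => simp [run.est_zero, suppF]
  | succ k => exact run.est_supp k hk

lemma sub_est_apply (x : Vec n) (hk : k ≤ N) {i : Fin n} (hi : i ∉ run.sets k) :
    (x - run.est k) i = x i := by
  rw [PiLp.sub_apply, suppF_subset_iff.1 (run.suppF_est_subset hk) i hi, sub_zero]

lemma card_sets (hk : k ≤ N) : #(run.sets k) = k := by
  induction k with
  | zero => simp [run.sets_zero]
  | succ k ih =>
    rw [run.sets_succ k hk, card_insert_of_notMem (run.idx_not_mem k hk), ih (by omega)]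

lemma sets_subset_sets {l : ℕ} (hkl : k ≤ l) (hl : l ≤ N) : run.sets k ⊆ run.sets l := by
  induction l, hkl using Nat.le_induction with
  | base => rfl
  | succ l _ ih => exact (ih (by omega)).trans (run.sets_succ l hl ▸ subset_insert _ _)

lemma card_union_sets_le (T : Finset (Fin n)) (hk : k ≤ N) : #(T ∪ run.sets k) ≤ #T + N :=
  (card_union_le _ _).trans (by rw [run.card_sets hk]; omega)

lemma suppF_sub_est_subset (x : Vec n) (hk : k ≤ N) :
    suppF (x - run.est k) ⊆ suppF x ∪ run.sets k :=
  (suppF_sub_subset _ _).trans (union_subset_union_right (run.suppF_est_subset hk))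

lemma res_eq_mulVec'_sub_add {x : Vec n} {v : Vec m} (run : OMPRun Φ (mulVec' Φ x + v) N)
    (hk : k ≤ N) : run.res k = mulVec' Φ (x - run.est k) + v := by
  rw [run.res_eq hk, mulVec'_sub]; abel

lemma card_sets_sdiff_le_card_sdiff_sets {T : Finset (Fin n)} (hT : N ≤ #T) :
    #(run.sets N \ T) ≤ #(T \ run.sets N) :=
  card_sdiff_le_card_sdiff_iff.2 ((run.card_sets le_rfl).trans_le hT)

lemma trimmedSum_add_mul_le {b : Fin n → ℝ} {T : Finset (Fin n)} {j : ℕ} {c : ℝ} {H : ℕ → ℝ}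
    (hH : ∀ k, 0 ≤ H k) (hcard : ∀ k < N, #{i ∈ T \ run.sets k | H k < b i} ≤ j)
    (hc : ∀ i ∈ T, c ≤ b i) (hj : j < #(T \ run.sets N)) (hk : k ≤ N) :
    trimmedSum b j T + c * #(run.sets k \ T) ≤
      trimmedSum b j (T \ run.sets k) + ∑ l ∈ range k, H l := by
  induction k with
  | zero => simp [run.sets_zero]
  | succ k ih =>
    have hnew := run.idx_not_mem k hk
    have ih := ih (by omega)
    rw [sum_range_succ, run.sets_succ k hk]
    by_cases hidx : run.idx (k + 1) ∈ T
    · rw [insert_sdiff_of_mem _ hidx, sdiff_insert]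
      linarith [trimmedSum_le_trimmedSum_erase_add (hH k) (hcard k hk) (run.idx (k + 1))]
    · obtain ⟨i, hi, hbi⟩ : ∃ i ∈ T \ run.sets k, b i ≤ H k := by
        by_contra! hlt
        have hsub := card_le_card
          (sdiff_subset_sdiff (Subset.refl T) (run.sets_subset_sets (Nat.le_of_succ_le hk) le_rfl))
        have := hcard k hk
        rw [filter_true_of_mem hlt] at this
        omega
      rw [insert_sdiff_of_notMem _ hidx, sdiff_insert_of_notMem hidx,
        card_insert_of_notMem fun h => hnew (sdiff_subset h)]
      push_cast
      linarith [hc i (sdiff_subset hi)]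

variable {L : ℕ} {δ : ℝ}

lemma sq_dot_idx_le (hδ : 0 ≤ δ) (hL : 1 ≤ L) (hΦ : IsRestrictedIsometry Φ L δ) (hk : k < N) :
    dot (col Φ (run.idx (k + 1))) (run.res k) ^ 2 ≤
      (1 + δ) * (‖run.res k‖ ^ 2 - ‖run.res (k + 1)‖ ^ 2) := by
  set t := run.idx (k + 1)
  set c := dot (col Φ t) (run.res k) with hc
  have hsupp : suppF (run.est k + (c / (1 + δ)) • EuclideanSpace.single t 1) ⊆
      run.sets (k + 1) := by
    rw [run.sets_succ k hk, insert_eq, union_comm]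
    exact (suppF_add_subset _ _).trans (union_subset_union (run.suppF_est_subset hk.le)
      ((suppF_smul_subset _ _).trans (suppF_single_subset _ _)))
  have hmin := run.est_min k hk _ hsupp
  rw [← run.res_succ k hk, mulVec'_add, mulVec'_smul, mulVec'_single_one, ← sub_sub,
    ← run.res_eq hk.le, hc, dot_eq_inner] at hmin
  have hdecr := (pow_le_pow_left₀ (norm_nonneg _) hmin 2).trans
    (norm_sub_inner_div_smul_sq_le (by linarith) (hΦ.norm_col_sq_le hL t) (run.res k))
  rw [← dot_eq_inner, ← hc] at hdecr
  rw [← div_le_iff₀' (by linarith)]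
  linarith

lemma sum_sq_dot_idx_le (hδ : 0 ≤ δ) (hL : N ≤ L) (hΦ : IsRestrictedIsometry Φ L δ) :
    ∑ k ∈ range N, dot (col Φ (run.idx (k + 1))) (run.res k) ^ 2 ≤
      (1 + δ) * (‖y‖ ^ 2 - ‖run.res N‖ ^ 2) := by
  have htelescope := sum_range_sub' (fun k => ‖run.res k‖ ^ 2) N
  rw [run.res_zero] at htelescope
  rw [← htelescope, mul_sum]
  refine sum_le_sum fun k hk => ?_
  rw [mem_range] at hk
  exact run.sq_dot_idx_le hδ (by omega) hΦ hk

lemma norm_res_le (hk : k ≤ N) : ‖run.res k‖ ≤ ‖y‖ := by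
  cases k with
  | zero => rw [run.res_zero]
  | succ k => simpa [run.res_succ k hk, mulVec'_zero] using run.est_min k hk 0 (by simp [suppF])

end OMPRun

section LowNoise

variable {m n N k : ℕ} {Φ : Matrix (Fin m) (Fin n) ℝ} {x : Vec n} {v : Vec m} {s B M μ : ℝ}

/-- The hypotheses under which `N` iterations of OMP on the data `Φ x + v` are analysed: `s` is
the square root of a restricted isometry constant of order `|supp x| + N`, the noise energy is at
most `s ^ 3` times that of `Φ x`, and `B` bounds the energy of `x`. -/
structure LowNoiseRegime (Φ : Matrix (Fin m) (Fin n) ℝ) (x : Vec n) (v : Vec m) (N : ℕ)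
    (s B : ℝ) : Prop where
  nonneg : 0 ≤ s
  le_half : s ≤ 1 / 2
  isRestrictedIsometry : IsRestrictedIsometry Φ (#(suppF x) + N) (s ^ 2)
  signal : ‖x‖ ^ 2 ≤ B
  noise : ‖v‖ ^ 2 ≤ s ^ 3 * ‖mulVec' Φ x‖ ^ 2

namespace LowNoiseRegime

lemma energy_nonneg (h : LowNoiseRegime Φ x v N s B) : 0 ≤ B := (sq_nonneg _).trans h.signal

lemma sq_le (h : LowNoiseRegime Φ x v N s B) : s ^ 2 ≤ s / 2 := by
  nlinarith [h.nonneg, h.le_half]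

lemma cube_le (h : LowNoiseRegime Φ x v N s B) : s ^ 3 ≤ s / 4 := by
  nlinarith [h.nonneg, h.le_half, h.sq_le]

lemma norm_mulVec'_sq_le (h : LowNoiseRegime Φ x v N s B) :
    ‖mulVec' Φ x‖ ^ 2 ≤ (1 + s ^ 2) * ‖x‖ ^ 2 :=
  (h.isRestrictedIsometry x (Nat.le_add_right _ _)).2

lemma norm_noise_sq_le (h : LowNoiseRegime Φ x v N s B) : ‖v‖ ^ 2 ≤ 5 / 4 * (s ^ 3 * B) := by
  have hs := h.nonneg
  calc ‖v‖ ^ 2 ≤ s ^ 3 * ‖mulVec' Φ x‖ ^ 2 := h.noise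
    _ ≤ s ^ 3 * ((1 + s ^ 2) * ‖x‖ ^ 2) := by gcongr; exact h.norm_mulVec'_sq_le
    _ ≤ s ^ 3 * (5 / 4 * B) := by
        gcongr
        · linarith [h.sq_le, h.le_half]
        · exact h.signal
    _ = 5 / 4 * (s ^ 3 * B) := by ring

lemma abs_two_mul_inner_noise_le (h : LowNoiseRegime Φ x v N s B) (a : Vec m) :
    |2 * ⟪a, v⟫_ℝ| ≤ s * (‖a‖ ^ 2 + B) := by
  have hB := h.energy_nonneg
  refine abs_two_mul_inner_le h.nonneg hB (h.norm_noise_sq_le.trans ?_)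
  have hcube : 5 / 4 * s ^ 3 ≤ s ^ 2 := by nlinarith [sq_nonneg s, h.le_half]
  nlinarith

lemma norm_data_sq_le (h : LowNoiseRegime Φ x v N s B) :
    ‖mulVec' Φ x + v‖ ^ 2 ≤ ‖x‖ ^ 2 + 4 * s * B := by
  have hs := h.nonneg
  have hcross := (le_abs_self _).trans (h.abs_two_mul_inner_noise_le (mulVec' Φ x))
  calc ‖mulVec' Φ x + v‖ ^ 2
      ≤ (1 + s) * ‖mulVec' Φ x‖ ^ 2 + s * B + ‖v‖ ^ 2 := by rw [norm_add_sq_real]; linarith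
    _ ≤ (1 + s) * ((1 + s ^ 2) * ‖x‖ ^ 2) + s * B + 5 / 4 * (s ^ 3 * B) := by
        gcongr
        · exact h.norm_mulVec'_sq_le
        · exact h.norm_noise_sq_le
    _ = ‖x‖ ^ 2 + (s + s ^ 2 + s ^ 3) * ‖x‖ ^ 2 + s * B + 5 / 4 * (s ^ 3 * B) := by ring
    _ ≤ ‖x‖ ^ 2 + (s + s ^ 2 + s ^ 3) * B + s * B + 5 / 4 * (s ^ 3 * B) := by
        gcongr; exact h.signal
    _ ≤ ‖x‖ ^ 2 + 4 * s * B := by nlinarith [h.sq_le, h.cube_le, h.energy_nonneg]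

lemma norm_data_sq_le_mul (h : LowNoiseRegime Φ x v N s B) : ‖mulVec' Φ x + v‖ ^ 2 ≤ 3 * B := by
  have hsB : s * B ≤ 1 / 2 * B := mul_le_mul_of_nonneg_right h.le_half h.energy_nonneg
  linarith [h.norm_data_sq_le, h.signal]

lemma mul_norm_sub_est_sq_le_norm_res_sq (h : LowNoiseRegime Φ x v N s B)
    (run : OMPRun Φ (mulVec' Φ x + v) N) (hk : k ≤ N) :
    (1 - s - s ^ 2) * ‖x - run.est k‖ ^ 2 ≤ ‖run.res k‖ ^ 2 + s * B := by
  have hs := h.nonneg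
  have hlower := (h.isRestrictedIsometry (x - run.est k)
    ((card_le_card (run.suppF_sub_est_subset x hk)).trans (run.card_union_sets_le _ hk))).1
  have hcross := (abs_le.1 (h.abs_two_mul_inner_noise_le (mulVec' Φ (x - run.est k)))).1
  calc (1 - s - s ^ 2) * ‖x - run.est k‖ ^ 2
      ≤ (1 - s) * ((1 - s ^ 2) * ‖x - run.est k‖ ^ 2) := by
        nlinarith [mul_nonneg (pow_nonneg hs 3) (sq_nonneg ‖x - run.est k‖)]
    _ ≤ (1 - s) * ‖mulVec' Φ (x - run.est k)‖ ^ 2 := by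
        gcongr; linarith [h.le_half]
    _ ≤ ‖run.res k‖ ^ 2 + s * B := by
        rw [run.res_eq_mulVec'_sub_add hk, norm_add_sq_real]
        linarith [sq_nonneg ‖v‖]

lemma norm_sub_est_sq_le (h : LowNoiseRegime Φ x v N s B)
    (run : OMPRun Φ (mulVec' Φ x + v) N) (hk : k ≤ N) : ‖x - run.est k‖ ^ 2 ≤ 14 * B := by
  have hres : ‖run.res k‖ ^ 2 ≤ ‖mulVec' Φ x + v‖ ^ 2 := by gcongr; exact run.norm_res_le hk
  have hsB : s * B ≤ 1 / 2 * B := mul_le_mul_of_nonneg_right h.le_half h.energy_nonneg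
  have hquarter : 1 / 4 * ‖x - run.est k‖ ^ 2 ≤ (1 - s - s ^ 2) * ‖x - run.est k‖ ^ 2 := by
    gcongr; linarith [h.sq_le, h.le_half]
  linarith [h.mul_norm_sub_est_sq_le_norm_res_sq run hk, h.norm_data_sq_le_mul]

lemma norm_sub_est_sq_le_norm_res_sq_add (h : LowNoiseRegime Φ x v N s B)
    (run : OMPRun Φ (mulVec' Φ x + v) N) (hk : k ≤ N) :
    ‖x - run.est k‖ ^ 2 ≤ ‖run.res k‖ ^ 2 + 22 * s * B := by
  have hsmall : (s + s ^ 2) * ‖x - run.est k‖ ^ 2 ≤ 3 / 2 * s * (14 * B) := by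
    have hs := h.nonneg
    gcongr
    · linarith [h.sq_le]
    · exact h.norm_sub_est_sq_le run hk
  linarith [h.mul_norm_sub_est_sq_le_norm_res_sq run hk]

lemma norm_data_sq_sub_norm_res_sq_le (h : LowNoiseRegime Φ x v N s B)
    (run : OMPRun Φ (mulVec' Φ x + v) N) (hk : k ≤ N) :
    ‖mulVec' Φ x + v‖ ^ 2 - ‖run.res k‖ ^ 2 ≤
      ‖x‖ ^ 2 - ∑ i ∈ suppF x \ run.sets k, x i ^ 2 + 26 * s * B := by
  have hmissed : ∑ i ∈ suppF x \ run.sets k, x i ^ 2 ≤ ‖x - run.est k‖ ^ 2 := by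
    refine le_trans (sum_congr rfl fun i hi => ?_).le (sum_sq_le_norm_sq _ _)
    rw [run.sub_est_apply x hk (mem_sdiff.1 hi).2]
  linarith [h.norm_data_sq_le, h.norm_sub_est_sq_le_norm_res_sq_add run hk]

lemma sum_sq_dot_res_sub_le (h : LowNoiseRegime Φ x v N s B)
    (run : OMPRun Φ (mulVec' Φ x + v) N) (hk : k ≤ N) :
    ∑ i ∈ suppF x \ run.sets k, (dot (col Φ i) (run.res k) - x i) ^ 2 ≤ 18 * s ^ 3 * B := by
  have hs := h.nonneg
  have hB := h.energy_nonneg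
  set z := x - run.est k with hz
  set e := _root_.restrict (mulVec' Φ.transpose (mulVec' Φ z + v) - z) (suppF x ∪ run.sets k)
  have he : ‖e‖ ≤ s ^ 2 * ‖z‖ + √(1 + s ^ 2) * ‖v‖ :=
    h.isRestrictedIsometry.norm_restrict_transpose_residual_sub_le (sq_nonneg s)
      (run.suppF_sub_est_subset x hk) (run.card_union_sets_le _ hk) v
  calc ∑ i ∈ suppF x \ run.sets k, (dot (col Φ i) (run.res k) - x i) ^ 2
      = ∑ i ∈ suppF x \ run.sets k,
          (mulVec' Φ.transpose (mulVec' Φ z + v) - z) i ^ 2 := by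
        refine sum_congr rfl fun i hi => ?_
        rw [run.res_eq_mulVec'_sub_add hk, PiLp.sub_apply, mulVec'_transpose_apply, hz,
          run.sub_est_apply x hk (mem_sdiff.1 hi).2]
    _ ≤ ‖e‖ ^ 2 := by
        rw [norm_restrict_sq]
        exact sum_le_sum_of_subset_of_nonneg (sdiff_subset.trans subset_union_left)
          fun i _ _ => sq_nonneg _
    _ ≤ (s ^ 2 * ‖z‖ + √(1 + s ^ 2) * ‖v‖) ^ 2 := by gcongr
    _ ≤ 2 * ((s ^ 2 * ‖z‖) ^ 2 + (√(1 + s ^ 2) * ‖v‖) ^ 2) := add_sq_le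
    _ = 2 * (s * (s ^ 3 * ‖z‖ ^ 2) + (1 + s ^ 2) * ‖v‖ ^ 2) := by
        rw [mul_pow √(1 + s ^ 2), Real.sq_sqrt (by positivity)]; ring
    _ ≤ 2 * (1 / 2 * (s ^ 3 * (14 * B)) + 5 / 4 * (5 / 4 * (s ^ 3 * B))) := by
        gcongr
        · exact h.le_half
        · exact h.norm_sub_est_sq_le run hk
        · linarith [h.sq_le, h.le_half]
        · exact h.norm_noise_sq_le
    _ ≤ 18 * s ^ 3 * B := by nlinarith [mul_nonneg (pow_nonneg hs 3) hB]

end LowNoiseRegime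

lemma card_filter_lt_sq_le (h : LowNoiseRegime Φ x v N s (#(suppF x) * M ^ 2))
    (run : OMPRun Φ (mulVec' Φ x + v) N) (hM : ∀ i ∈ suppF x, |x i| ≤ M) (hk : k < N) :
    (#{i ∈ suppF x \ run.sets k |
      (|dot (col Φ (run.idx (k + 1))) (run.res k)| + s * M) ^ 2 < x i ^ 2} : ℝ) ≤
      18 * s * #(suppF x) := by
  set missed := {i ∈ suppF x \ run.sets k |
    (|dot (col Φ (run.idx (k + 1))) (run.res k)| + s * M) ^ 2 < x i ^ 2}
  have hs := h.nonneg
  have herr : ∀ i ∈ missed, s ^ 2 * M ^ 2 < (dot (col Φ i) (run.res k) - x i) ^ 2 := by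
    intro i hi
    obtain ⟨hi, hlt⟩ := mem_filter.1 hi
    obtain ⟨hix, hik⟩ := mem_sdiff.1 hi
    have hM0 : 0 ≤ M := (abs_nonneg _).trans (hM i hix)
    have hx := (le_abs_self _).trans_lt (sq_lt_sq.1 hlt)
    have hdist := abs_sub_abs_le_abs_sub (x i) (dot (col Φ i) (run.res k))
    rw [← mul_pow, ← sq_abs (_ - _), abs_sub_comm]
    exact pow_lt_pow_left₀ (by linarith [run.idx_max k hk i hik]) (by positivity) two_ne_zero
  rcases missed.eq_empty_or_nonempty with hempty | hne
  · rw [hempty, card_empty, Nat.cast_zero]; positivity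
  have hcheb : #missed * (s ^ 2 * M ^ 2) < 18 * s * #(suppF x) * (s ^ 2 * M ^ 2) :=
    calc #missed * (s ^ 2 * M ^ 2)
        = ∑ _i ∈ missed, s ^ 2 * M ^ 2 := by rw [sum_const, nsmul_eq_mul]
      _ < ∑ i ∈ missed, (dot (col Φ i) (run.res k) - x i) ^ 2 := sum_lt_sum_of_nonempty hne herr
      _ ≤ ∑ i ∈ suppF x \ run.sets k, (dot (col Φ i) (run.res k) - x i) ^ 2 :=
          sum_le_sum_of_subset_of_nonneg (filter_subset _ _) fun i _ _ => sq_nonneg _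
      _ ≤ 18 * s ^ 3 * (#(suppF x) * M ^ 2) := h.sum_sq_dot_res_sub_le run hk.le
      _ = 18 * s * #(suppF x) * (s ^ 2 * M ^ 2) := by ring
  exact (lt_of_mul_lt_mul_right hcheb (by positivity)).le

lemma sum_sq_abs_dot_idx_add_le (h : LowNoiseRegime Φ x v N s (#(suppF x) * M ^ 2))
    (run : OMPRun Φ (mulVec' Φ x + v) N) (hN : N ≤ #(suppF x)) :
    ∑ k ∈ range N, (|dot (col Φ (run.idx (k + 1))) (run.res k)| + s * M) ^ 2 ≤
      ‖x‖ ^ 2 - ∑ i ∈ suppF x \ run.sets N, x i ^ 2 + 34 * s * (#(suppF x) * M ^ 2) := by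
  have hs := h.nonneg
  have hgain := run.sum_sq_dot_idx_le (sq_nonneg s) (Nat.le_add_left N _) h.isRestrictedIsometry
  have hloss := h.norm_data_sq_sub_norm_res_sq_le run le_rfl
  have hdata := h.norm_data_sq_le_mul
  have hterm : ∀ g : ℝ, (|g| + s * M) ^ 2 ≤ (1 + s) * g ^ 2 + 2 * s * M ^ 2 := by
    intro g
    nlinarith [mul_nonneg hs (sq_nonneg (|g| - M)), sq_abs g,
      mul_le_mul_of_nonneg_right h.sq_le (sq_nonneg M), mul_nonneg hs (sq_nonneg M)]
  have hNB : (N * M ^ 2 : ℝ) ≤ #(suppF x) * M ^ 2 := by gcongr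
  set B : ℝ := #(suppF x) * M ^ 2
  set D := ‖mulVec' Φ x + v‖ ^ 2 - ‖run.res N‖ ^ 2
  have hD_nonneg : 0 ≤ D := sub_nonneg.2 (by gcongr; exact run.norm_res_le le_rfl)
  have hD_le : D ≤ 3 * B := by linarith [sq_nonneg ‖run.res N‖]
  calc ∑ k ∈ range N, (|dot (col Φ (run.idx (k + 1))) (run.res k)| + s * M) ^ 2
      ≤ ∑ k ∈ range N, ((1 + s) * dot (col Φ (run.idx (k + 1))) (run.res k) ^ 2 +
          2 * s * M ^ 2) := sum_le_sum fun k _ => hterm _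
    _ = (1 + s) * ∑ k ∈ range N, dot (col Φ (run.idx (k + 1))) (run.res k) ^ 2 +
          2 * s * (N * M ^ 2) := by
        rw [sum_add_distrib, ← mul_sum, sum_const, card_range, nsmul_eq_mul]; ring
    _ ≤ (1 + s) * ((1 + s ^ 2) * D) + 2 * s * B := by gcongr
    _ = D + (s + s ^ 2 + s ^ 3) * D + 2 * s * B := by ring
    _ ≤ D + 2 * s * (3 * B) + 2 * s * B := by
        gcongr
        linarith [h.sq_le, h.cube_le]
    _ ≤ _ := by linarith

lemma sq_mul_card_sets_sdiff_suppF_le (h : LowNoiseRegime Φ x v N s (#(suppF x) * M ^ 2))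
    (run : OMPRun Φ (mulVec' Φ x + v) N) (hN : N ≤ #(suppF x)) (hM : ∀ i ∈ suppF x, |x i| ≤ M)
    (hμ0 : 0 ≤ μ) (hμM : μ ≤ M) (hμ : ∀ i ∈ suppF x, μ ≤ |x i|) :
    μ ^ 2 * #(run.sets N \ suppF x) ≤ 52 * s * (#(suppF x) * M ^ 2) := by
  have hs := h.nonneg
  set j : ℕ := ⌊18 * s * #(suppF x)⌋₊
  have hj : (j : ℝ) ≤ 18 * s * #(suppF x) := Nat.floor_le (by positivity)
  by_cases hfew : #(run.sets N \ suppF x) ≤ j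
  · calc μ ^ 2 * #(run.sets N \ suppF x) ≤ M ^ 2 * (18 * s * #(suppF x)) := by
          gcongr; exact (Nat.cast_le.2 hfew).trans hj
      _ ≤ 52 * s * (#(suppF x) * M ^ 2) := by
          nlinarith [mul_nonneg hs h.energy_nonneg]
  have hpotential := run.trimmedSum_add_mul_le (T := suppF x) (b := fun i => x i ^ 2) (c := μ ^ 2)
    (fun _ => sq_nonneg _) (fun k hk => Nat.le_floor (card_filter_lt_sq_le h run hM hk))
    (fun i hi => by rw [← sq_abs (x i)]; gcongr; exact hμ i hi)
    ((not_le.1 hfew).trans_le (run.card_sets_sdiff_le_card_sdiff_sets hN)) le_rfl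
  have hinit := sum_sub_mul_le_trimmedSum (s := suppF x) (b := fun i => x i ^ 2) (j := j)
    (sq_nonneg M) (fun i hi => by rw [← sq_abs (x i)]; gcongr; exact hM i hi)
  have hfinal := trimmedSum_le_sum_of_subset (b := fun i => x i ^ 2) (j := j)
    (Subset.refl (suppF x \ run.sets N)) (Nat.le_add_right _ _)
  have htrim : (j : ℝ) * M ^ 2 ≤ 18 * s * #(suppF x) * M ^ 2 := by gcongr
  rw [← norm_sq_eq_sum_suppF] at hinit
  linarith [sum_sq_abs_dot_idx_add_le h run hN]

end LowNoise

section ErrorRate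

variable {m n K N : ℕ} {Φ : Matrix (Fin m) (Fin n) ℝ} {x : Vec n} {v y : Vec m}
  {T : Finset (Fin n)} {δ κ : ℝ}

lemma one_le_of_abs_div_abs_le (hT : suppF x = T) (hTne : T.Nonempty)
    (hκ : ∀ i ∈ T, ∀ j ∈ T, |x i| / |x j| ≤ κ) : 1 ≤ κ := by
  obtain ⟨i, hi⟩ := hTne
  have hxi : x i ≠ 0 := mem_suppF.1 (hT ▸ hi)
  simpa [div_self (abs_ne_zero.2 hxi)] using hκ i hi i hi

lemma abs_div_abs_le_sup' (x : Vec n) (hTne : T.Nonempty) : ∀ i ∈ T, ∀ j ∈ T,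
    |x i| / |x j| ≤ (T ×ˢ T).sup' (hTne.product hTne) fun p => |x p.1| / |x p.2| :=
  fun _ hi _ hj => le_sup' (fun p : Fin n × Fin n => |x p.1| / |x p.2|) (mk_mem_product hi hj)

lemma norm_sq_le_of_le_SNR (hδ : 0 < δ) (hκ : 1 ≤ κ)
    (hsnr : κ ^ 2 * δ ^ (-(3 : ℝ) / 2) ≤ SNR Φ x v) :
    ‖v‖ ^ 2 ≤ δ ^ ((3 : ℝ) / 2) * ‖mulVec' Φ x‖ ^ 2 := by
  rcases eq_or_ne v 0 with rfl | hv
  · rw [norm_zero, zero_pow two_ne_zero]; positivity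
  have hinv : (δ ^ ((3 : ℝ) / 2))⁻¹ ≤ ‖mulVec' Φ x‖ ^ 2 / ‖v‖ ^ 2 :=
    calc (δ ^ ((3 : ℝ) / 2))⁻¹ = δ ^ (-(3 : ℝ) / 2) := by rw [neg_div, Real.rpow_neg hδ.le]
      _ ≤ κ ^ 2 * δ ^ (-(3 : ℝ) / 2) :=
          le_mul_of_one_le_left (by positivity) (one_le_pow₀ hκ)
      _ ≤ ‖mulVec' Φ x‖ ^ 2 / ‖v‖ ^ 2 := hsnr
  rwa [le_div_iff₀ (by positivity), inv_mul_le_iff₀ (by positivity)] at hinv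

lemma card_sets_sdiff_le (hT : suppF x = T) (hTne : T.Nonempty) (hN : N ≤ #T) (hδ : 0 ≤ δ)
    (hΦ : IsRestrictedIsometry Φ (#T + N) δ) (hκ : ∀ i ∈ T, ∀ j ∈ T, |x i| / |x j| ≤ κ)
    (hv : ‖v‖ ^ 2 ≤ δ ^ ((3 : ℝ) / 2) * ‖mulVec' Φ x‖ ^ 2) (hs : √δ ≤ 1 / 2)
    (run : OMPRun Φ (mulVec' Φ x + v) N) :
    (#(run.sets N \ T) : ℝ) ≤ 52 * κ ^ 2 * √δ * #T := by
  have hκ1 := one_le_of_abs_div_abs_le hT hTne hκ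
  subst hT
  obtain ⟨j, hj, hmin⟩ := exists_min_image (suppF x) (fun i => |x i|) hTne
  have hxj : 0 < |x j| := abs_pos.2 (mem_suppF.1 hj)
  have hmax : ∀ i ∈ suppF x, |x i| ≤ κ * |x j| := fun i hi => (div_le_iff₀ hxj).1 (hκ i hi j hj)
  have hcube : δ ^ ((3 : ℝ) / 2) = √δ ^ 3 := by
    rw [Real.sqrt_eq_rpow, ← Real.rpow_mul_natCast hδ]; norm_num
  have hregime : LowNoiseRegime Φ x v N √δ (#(suppF x) * (κ * |x j|) ^ 2) :=
    { nonneg := Real.sqrt_nonneg δ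
      le_half := hs
      isRestrictedIsometry := by rwa [Real.sq_sqrt hδ]
      signal := by
        rw [norm_sq_eq_sum_suppF, ← nsmul_eq_mul]
        exact sum_le_card_nsmul _ _ _ fun i hi => by
          rw [← sq_abs (x i)]; gcongr; exact hmax i hi
      noise := hcube ▸ hv }
  have hmain := sq_mul_card_sets_sdiff_suppF_le hregime run hN hmax hxj.le
    (le_mul_of_one_le_left hxj.le hκ1) hmin
  refine le_of_mul_le_mul_left ?_ (pow_pos hxj 2)
  linarith

theorem stmt3_general (hT : suppF x = T) (hK : #T = K) (hN : N ≤ K) (hδ : 0 ≤ δ)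
    (hΦ : IsRestrictedIsometry Φ (K + N) δ) (hκ : ∀ i ∈ T, ∀ j ∈ T, |x i| / |x j| ≤ κ)
    (hy : y = mulVec' Φ x + v) (hv : ‖v‖ ^ 2 ≤ δ ^ ((3 : ℝ) / 2) * ‖mulVec' Φ x‖ ^ 2)
    (run : OMPRun Φ y N) :
    (#(run.sets N \ T) : ℝ) / K ≤ 52 * κ ^ 2 * δ ^ ((1 : ℝ) / 2) := by
  subst hK hy
  rw [← Real.sqrt_eq_rpow]
  refine div_le_of_le_mul₀ (Nat.cast_nonneg _) (by positivity) ?_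
  have htriv : (#(run.sets N \ T) : ℝ) ≤ #T := by
    exact_mod_cast (card_le_card sdiff_subset).trans ((run.card_sets le_rfl).trans_le hN)
  rcases T.eq_empty_or_nonempty with rfl | hTne
  · simpa using htriv
  by_cases hs : √δ ≤ 1 / 2
  · exact card_sets_sdiff_le hT hTne hN hδ hΦ hκ hv hs run
  · have hκ2 : 1 ≤ κ ^ 2 := one_le_pow₀ (one_le_of_abs_div_abs_le hT hTne hκ)
    refine htriv.trans (le_mul_of_one_le_left (Nat.cast_nonneg _) ?_)
    nlinarith

end ErrorRate

/-- approximate support recovery with constant SNR: there is an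
absolute constant `C > 0` such that if `SNR ≥ κ² δ^{-3/2}` then every run of
`K` iterations of OMP has error rate `|T^K \ T|/K ≤ C κ² δ^{1/2}`. -/
theorem stmt3 : ∃ C : ℝ, 0 < C ∧
    ∀ (m n K : ℕ) (Φ : Matrix (Fin m) (Fin n) ℝ) (δ : ℝ) (x : Vec n) (v y : Vec m)
      (T : Finset (Fin n)) (hTne : T.Nonempty),
      suppF x = T → T.card = K → 1 ≤ K →
      RIPConst Φ (2 * K) δ → 0 < δ → δ < 1 →
      v ≠ 0 → y = mulVec' Φ x + v →
      SNR Φ x v ≥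
        (((T ×ˢ T).sup' (hTne.product hTne) fun p => |x p.1| / |x p.2|)) ^ 2
          * δ ^ (-(3 : ℝ) / 2) →
      ∀ run : OMPRun Φ y K,
        ((run.sets K \ T).card : ℝ) / K ≤
          C * (((T ×ˢ T).sup' (hTne.product hTne) fun p => |x p.1| / |x p.2|)) ^ 2
            * δ ^ ((1 : ℝ) / 2) := by
  refine ⟨52, by norm_num, fun m n K Φ δ x v y T hTne hT hK _ hΦ hδ _ _ hy hsnr run => ?_⟩
  have hκ := abs_div_abs_le_sup' x hTne
  exact stmt3_general hT hK le_rfl hδ.le (two_mul K ▸ hΦ.isRestrictedIsometry) hκ hy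
    (norm_sq_le_of_le_SNR hδ (one_le_of_abs_div_abs_le hT hTne hκ) hsnr) run

end
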